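/- Watson's classical theorem expressed via Gamma functions, in the terminating case: for every natural number n and all complex numbers b and c such that the Gamma-function arguments on the right-hand side avoid the non-positive integers where required for the quotient to be defined (specifically, (b+1)/2, c + (1-b)/2, c + 1/2 + n and (b+1)/2 - n are not poles appearing in the denominator, and (a+1)/2 + k ≠ 0, 2c + k ≠ 0 for 0 ≤ k ≤ 2n-1 with a = -2n in the hypergeometric parameters), one has ∑_{k=0}^{2n} [(-2n)_k (b)_k (c)_k] / [((b+1-2n)/2)_k (2c)_k k!] = [Γ(1/2) Γ(c+1/2) Γ((b+1)/2 - n) Γ(c + (1-b)/2 + n)] / [Γ(1/2 - n) Γ((b+1)/2) Γ(c + 1/2 + n) Γ(c + (1-b)/2)], where (x)_k denotes the rising factorial and Γ is the complex Gamma function. -/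

import Mathlib

/-!
Let `T(a, b, c; k)` be the `k`-th term of Watson's series. Zeilberger's algorithm finds a linear
combination of `T(a - 2, b + 2, c; k)` and `T(a, b, c; k)`, with coefficients free of `k`, whose
partial sum up to `k = m` is a multiple of `T(a - 1, b + 1, c; m)`. For `a = -2n` this last term
vanishes at `m = 2n + 2`, which leaves a first-order recurrence expressing the terminating sum at
`(-2(n + 1), b)` through the one at `(-2n, b - 2)`. Iterating it gives a quotient of Pochhammer
symbols, each of which has the form `Γ(x + n) / Γ(x)`.
-/

open Finset Complex

/-- The Pochhammer symbol (rising factorial) `(x)_k = x(x+1)⋯(x+k-1)` for a complex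
number `x`, with `(x)_0 = 1`. -/
noncomputable def poch (x : ℂ) (k : ℕ) : ℂ := (ascPochhammer ℂ k).eval x

lemma ascPochhammer_succ_eval_left {R : Type*} [CommSemiring R] (k : ℕ) (x : R) :
    (ascPochhammer R (k + 1)).eval x = x * (ascPochhammer R k).eval (x + 1) := by
  simp [ascPochhammer_succ_left, Polynomial.eval_comp]

lemma half_sub_natCast_ne_neg_natCast {K : Type*} [Field K] [CharZero K] (n m : ℕ) :
    1 / 2 - (n : K) ≠ -(m : K) := by
  intro h
  have hodd : ((2 * m + 1 : ℕ) : K) = (2 * n : ℕ) := by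
    push_cast
    linear_combination 2 * h
  have := Nat.cast_injective hodd
  lia

section WatsonTerm

variable {K : Type*} [Field K]

/-- The `k`-th term of Watson's series `₃F₂(a, b, c; (a + b + 1) / 2, 2c; 1)`. -/
noncomputable def watsonTerm (a b c : K) (k : ℕ) : K :=
  ((ascPochhammer K k).eval a * (ascPochhammer K k).eval b * (ascPochhammer K k).eval c) /
    ((ascPochhammer K k).eval ((a + b + 1) / 2) * (ascPochhammer K k).eval (2 * c) *
      (k.factorial : K))

@[simp]
lemma watsonTerm_zero (a b c : K) : watsonTerm a b c 0 = 1 := by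
  simp [watsonTerm]

lemma watsonTerm_comm (a b c : K) (k : ℕ) : watsonTerm a b c k = watsonTerm b a c k := by
  simp only [watsonTerm, add_comm a b, mul_comm ((ascPochhammer K k).eval a)]

lemma watsonTerm_neg_natCast_eq_zero {m k : ℕ} (hmk : m < k) (b c : K) :
    watsonTerm (-(m : K)) b c k = 0 := by
  simp [watsonTerm, ascPochhammer_eval_neg_coe_nat_of_lt hmk]

lemma watsonTerm_succ (a b c : K) (k : ℕ) :
    watsonTerm a b c (k + 1) = watsonTerm a b c k *
      ((a + k) * (b + k)) * ((c + k) / (((a + b + 1) / 2 + k) * (2 * c + k) * (k + 1))) := by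
  simp only [watsonTerm, ascPochhammer_succ_eval, Nat.factorial_succ, Nat.cast_mul, Nat.cast_succ]
  rw [div_mul_eq_mul_div, div_mul_div_comm]
  congr 1 <;> ring

lemma mul_watsonTerm_sub_one_add_one_succ (a b c : K) (k : ℕ) :
    b * watsonTerm (a - 1) (b + 1) c (k + 1) = watsonTerm a b c k *
      ((a - 1) * (b + k) * (b + k + 1)) *
        ((c + k) / (((a + b + 1) / 2 + k) * (2 * c + k) * (k + 1))) := by
  have lower : (ascPochhammer K (k + 1)).eval (a - 1) = (a - 1) * (ascPochhammer K k).eval a := by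
    rw [ascPochhammer_succ_eval_left, sub_add_cancel]
  have raise : b * (ascPochhammer K (k + 1)).eval (b + 1) =
      (ascPochhammer K k).eval b * (b + k) * (b + k + 1) := by
    rw [← ascPochhammer_succ_eval_left, ascPochhammer_succ_eval, ascPochhammer_succ_eval,
      Nat.cast_succ, add_assoc]
  simp only [watsonTerm, lower, show a - 1 + (b + 1) + 1 = a + b + 1 by ring]
  rw [← mul_div_assoc, div_mul_eq_mul_div, div_mul_div_comm]
  congr 1
  · linear_combination (a - 1) * (ascPochhammer K k).eval a *
      (ascPochhammer K (k + 1)).eval c * raise +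
      (a - 1) * (ascPochhammer K k).eval a * (ascPochhammer K k).eval b * (b + k) * (b + k + 1) *
        ascPochhammer_succ_eval k c
  · simp only [ascPochhammer_succ_eval, Nat.factorial_succ, Nat.cast_mul, Nat.cast_succ]
    ring

variable [CharZero K]

theorem sum_watsonTerm_contiguous (a b c : K) (m : ℕ)
    (hab : ∀ k < m, (a + b + 1) / 2 + k ≠ 0) (hc : ∀ k < m, 2 * c + k ≠ 0) :
    ∑ k ∈ range (m + 1), ((2 * c + 1 - a) * (b + 1) * watsonTerm (a - 2) (b + 2) c k -
        (1 - a) * (b + 1 - 2 * c) * watsonTerm a b c k) =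
      2 * (b - a + 2) * (c + m) * watsonTerm (a - 1) (b + 1) c m := by
  induction m with
  | zero =>
    simp only [zero_add, sum_range_one, watsonTerm_zero, Nat.cast_zero]
    ring
  | succ m ih =>
    rw [sum_range_succ, ih (fun k hk ↦ hab k (hk.trans m.lt_succ_self))
      (fun k hk ↦ hc k (hk.trans m.lt_succ_self))]
    have outward := mul_watsonTerm_sub_one_add_one_succ (a - 1) (b + 1) c m
    have inward := mul_watsonTerm_sub_one_add_one_succ (b + 1) (a - 1) c m
    have diagonal := watsonTerm_succ (a - 1) (b + 1) c m
    rw [sub_sub, add_assoc b, one_add_one_eq_two] at outward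
    rw [add_sub_cancel_right, sub_add_cancel, watsonTerm_comm b a, watsonTerm_comm (b + 1),
      add_comm (b + 1) (a - 1)] at inward
    have hden : ((a - 1 + (b + 1) + 1) / 2 + m) * (2 * c + m) * (m + 1) ≠ 0 := by
      rw [sub_add_add_cancel]
      exact mul_ne_zero (mul_ne_zero (hab m m.lt_succ_self) (hc m m.lt_succ_self))
        (Nat.cast_add_one_ne_zero m)
    have hratio := div_mul_cancel₀ (c + m) hden
    set ratio := (c + m) / (((a - 1 + (b + 1) + 1) / 2 + m) * (2 * c + m) * (m + 1))
    push_cast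
    linear_combination (2 * c + 1 - a) * outward + (b + 1 - 2 * c) * inward -
      2 * (b - a + 2) * (c + m + 1) * diagonal -
      2 * (b - a + 2) * watsonTerm (a - 1) (b + 1) c m * hratio

theorem sum_watsonTerm_neg_two_mul_succ (n : ℕ) (b c : K)
    (hb : ∀ k < 2 * (n + 1), (b + 1) / 2 - (n + 1) + k ≠ 0)
    (hc : ∀ k < 2 * (n + 1), 2 * c + k ≠ 0) :
    ∑ k ∈ range (2 * (n + 1) + 1), watsonTerm (-(2 * (n + 1 : K))) b c k =
      (1 / 2 - (n + 1)) * (c + (1 - b) / 2) / ((c + 1 / 2 + n) * ((b - 1) / 2)) *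
        ∑ k ∈ range (2 * n + 1), watsonTerm (-(2 * n : K)) (b - 2) c k := by
  have contiguous := sum_watsonTerm_contiguous (-(2 * n : K)) (b - 2) c (2 * (n + 1))
    (fun k hk ↦ by convert hb k hk using 2; ring) hc
  have boundary : watsonTerm (-(2 * n : K) - 1) (b - 2 + 1) c (2 * (n + 1)) = 0 := by
    rw [show -(2 * n : K) - 1 = -((2 * n + 1 : ℕ) : K) by push_cast; ring]
    exact watsonTerm_neg_natCast_eq_zero (by lia) _ _
  have truncate : ∑ k ∈ range (2 * (n + 1) + 1), watsonTerm (-(2 * n : K)) (b - 2) c k =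
      ∑ k ∈ range (2 * n + 1), watsonTerm (-(2 * n : K)) (b - 2) c k := by
    refine (sum_subset (range_subset_range.2 (by lia)) fun k _ hk ↦ ?_).symm
    have hnk : 2 * n < k := by simpa only [mem_range, not_lt, Nat.succ_le_iff] using hk
    exact_mod_cast watsonTerm_neg_natCast_eq_zero hnk (b - 2) c
  have hlower : -(2 * n : K) - 2 = -(2 * (n + 1)) := by ring
  rw [boundary, mul_zero, sum_sub_distrib, ← mul_sum, ← mul_sum, truncate, sub_add_cancel,
    hlower] at contiguous
  have hc_half : c + 1 / 2 + n ≠ 0 := fun h ↦ hc (2 * n + 1) (by lia) (by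
    push_cast
    linear_combination 2 * h)
  have hb_pred : (b - 1) / 2 ≠ 0 := fun h ↦ hb n (by lia) (by linear_combination h)
  rw [div_mul_eq_mul_div, eq_div_iff (mul_ne_zero hc_half hb_pred)]
  linear_combination contiguous / 4

theorem sum_watsonTerm_neg_two_mul (n : ℕ) (b c : K)
    (hb : ∀ k < 2 * n, (b + 1) / 2 - n + k ≠ 0) (hc : ∀ k < 2 * n, 2 * c + k ≠ 0) :
    ∑ k ∈ range (2 * n + 1), watsonTerm (-(2 * n : K)) b c k =
      ((ascPochhammer K n).eval (1 / 2 - n : K) * (ascPochhammer K n).eval (c + (1 - b) / 2)) /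
        ((ascPochhammer K n).eval (c + 1 / 2) * (ascPochhammer K n).eval ((b + 1) / 2 - n)) := by
  induction n generalizing b with
  | zero => simp
  | succ n ih =>
    rw [Nat.cast_succ] at hb ⊢
    have hmid : (b - 2 + 1) / 2 - n = (b + 1) / 2 - (n + 1) := by ring
    have half : (ascPochhammer K (n + 1)).eval (1 / 2 - (n + 1) : K) =
        (1 / 2 - (n + 1)) * (ascPochhammer K n).eval (1 / 2 - n : K) := by
      rw [ascPochhammer_succ_eval_left, show (1 / 2 - (n + 1) + 1 : K) = 1 / 2 - n by ring]
    have excess : (ascPochhammer K (n + 1)).eval (c + (1 - b) / 2) =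
        (c + (1 - b) / 2) * (ascPochhammer K n).eval (c + (1 - (b - 2)) / 2) := by
      rw [ascPochhammer_succ_eval_left, show c + (1 - b) / 2 + 1 = c + (1 - (b - 2)) / 2 by ring]
    have middle : (ascPochhammer K (n + 1)).eval ((b + 1) / 2 - (n + 1)) =
        (ascPochhammer K n).eval ((b + 1) / 2 - (n + 1)) * ((b - 1) / 2) := by
      rw [ascPochhammer_succ_eval, show (b + 1) / 2 - (n + 1) + n = (b - 1) / 2 by ring]
    rw [sum_watsonTerm_neg_two_mul_succ n b c hb hc,
      ih (b - 2) (fun k hk ↦ hmid ▸ hb k (by lia)) (fun k hk ↦ hc k (by lia)),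
      hmid, half, excess, middle, ascPochhammer_succ_eval, div_mul_div_comm]
    congr 1 <;> ring

end WatsonTerm

/-- **Watson's classical theorem** expressed via Gamma functions, in the terminating
case `a = -2n`. -/
theorem watson_gamma (n : ℕ) (b c : ℂ)
    (hb : ∀ m : ℕ, (b + 1) / 2 ≠ -(m : ℂ))
    (hcb : ∀ m : ℕ, c + (1 - b) / 2 ≠ -(m : ℂ))
    (hcn : ∀ m : ℕ, c + 1 / 2 + n ≠ -(m : ℂ))
    (hbn : ∀ m : ℕ, (b + 1) / 2 - n ≠ -(m : ℂ))
    (h₁ : ∀ k : ℕ, k < 2 * n → (b + 1 - 2 * n) / 2 + k ≠ 0)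
    (h₂ : ∀ k : ℕ, k < 2 * n → 2 * c + k ≠ 0) :
    ∑ k ∈ Finset.range (2 * n + 1),
      (poch (-(2 * n : ℂ)) k * poch b k * poch c k) /
        (poch ((b + 1 - 2 * n) / 2) k * poch (2 * c) k * (Nat.factorial k : ℂ)) =
      (Complex.Gamma (1 / 2) * Complex.Gamma (c + 1 / 2) *
        Complex.Gamma ((b + 1) / 2 - n) * Complex.Gamma (c + (1 - b) / 2 + n)) /
      (Complex.Gamma (1 / 2 - n) * Complex.Gamma ((b + 1) / 2) *
        Complex.Gamma (c + 1 / 2 + n) * Complex.Gamma (c + (1 - b) / 2)) := by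
  have hc : ∀ m : ℕ, c + 1 / 2 ≠ -(m : ℂ) := by
    intro m hm
    rcases lt_or_ge m n with hmn | hnm
    · refine h₂ (2 * m + 1) (by lia) ?_
      push_cast
      linear_combination 2 * hm
    · refine hcn (m - n) ?_
      rw [Nat.cast_sub hnm]
      linear_combination hm
  have hmid : (b + 1 - 2 * n) / 2 = (-(2 * n) + b + 1) / 2 := by ring
  have watson := sum_watsonTerm_neg_two_mul n b c
    (fun k hk ↦ by convert h₁ k hk using 2; ring) h₂
  rw [← Gamma_add_nat_div_Gamma_eq _ (half_sub_natCast_ne_neg_natCast n),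
    ← Gamma_add_nat_div_Gamma_eq _ hcb, ← Gamma_add_nat_div_Gamma_eq _ hc,
    ← Gamma_add_nat_div_Gamma_eq _ hbn, sub_add_cancel, sub_add_cancel] at watson
  simp only [poch, hmid]
  refine watson.trans ?_
  simp only [div_mul_div_comm, div_div_div_eq]
  congr 1 <;> ring
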